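/- arXiv:1807.09578 — 3 statements merged into one kernel-verified Lean document; each statement's English description precedes it below -/
import Mathlib

section
/- For every function λ : ∂𝔻 → ∂𝔻 of the class BV(∂𝔻) there exists a function α_λ : ∂𝔻 → ℝ of the class BV(∂𝔻) with V_{α_λ}(∂𝔻) ≤ (3π/2)·V_λ(∂𝔻) such that λ(ζ) = exp(i·α_λ(ζ)) for all ζ ∈ ∂𝔻. -/
open Complex Metric MeasureTheory Filter Topology Set
open scoped ENNReal NNReal

noncomputable section

/-- The supremum of products of mutual distances of `n`-tuples of points of `E`
(the quantity `V_n` in the definition of the transfinite diameter). -/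
noncomputable def diamProd (E : Set ℂ) (n : ℕ) : ℝ≥0∞ :=
  ⨆ (z : Fin n → ℂ) (_ : ∀ i, z i ∈ E),
    ∏ p ∈ Finset.univ.filter (fun p : Fin n × Fin n => p.1 < p.2), edist (z p.1) (z p.2)

/-- The logarithmic capacity of a (bounded) set, defined as its transfinite diameter
`lim_n V_n^{2/(n(n-1))}` (realized via `limsup`). -/
noncomputable def logCap (E : Set ℂ) : ℝ≥0∞ :=
  Filter.limsup (fun n : ℕ => diamProd E n ^ ((2 : ℝ) / ((n : ℝ) * ((n : ℝ) - 1))))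
    Filter.atTop

/-- A set is measurable with respect to logarithmic capacity if its inner capacity
(sup of capacities of compact subsets) equals its outer capacity
(inf of capacities of open supersets). -/
def CapMeasurableSet (E : Set ℂ) : Prop :=
  (⨆ (F : Set ℂ) (_ : IsCompact F) (_ : F ⊆ E), logCap F) =
    (⨅ (U : Set ℂ) (_ : IsOpen U) (_ : E ⊆ U), logCap U)

/-- A function defined on `E ⊆ ℂ` is measurable with respect to logarithmic capacity if
preimages of open sets are measurable with respect to logarithmic capacity. -/
def CapMeasFunOn {X : Type*} [TopologicalSpace X] (E : Set ℂ) (f : ℂ → X) : Prop :=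
  ∀ O : Set X, IsOpen O → CapMeasurableSet {z | z ∈ E ∧ f z ∈ O}

/-- `P` holds quasi-everywhere on `E`: the exceptional set has logarithmic capacity zero. -/
def QEOn (E : Set ℂ) (P : ℂ → Prop) : Prop :=
  logCap {z | z ∈ E ∧ ¬ P z} = 0

/-- The unit circle `∂𝔻`. -/
def unitCircle : Set ℂ := Metric.sphere 0 1

/-- Variation of `f` along the parametrized arc `p` over parameters in `I`. -/
noncomputable def varAlong {E : Type*} [SeminormedAddCommGroup E]
    (f : ℂ → E) (p : ℝ → ℂ) (I : Set ℝ) : ℝ≥0∞ :=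
  ⨆ (k : ℕ) (t : Fin (k + 1) → ℝ) (_ : Monotone t) (_ : ∀ i, t i ∈ I),
    ∑ i : Fin k, (‖f (p (t i.succ)) - f (p (t i.castSucc))‖₊ : ℝ≥0∞)

/-- Cyclic variation of `f` on the unit circle: the supremum of
`∑ⱼ ‖f(ζ_{j+1}) - f(ζ_j)‖` over all finite collections of points of `∂𝔻` in cyclic order
(realized by monotone angle parameters running over at most one full turn). -/
noncomputable def circleVar {E : Type*} [SeminormedAddCommGroup E] (f : ℂ → E) : ℝ≥0∞ :=
  ⨆ (k : ℕ) (t : Fin (k + 1) → ℝ) (_ : Monotone t)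
    (_ : t (Fin.last k) ≤ t 0 + 2 * Real.pi),
    ∑ i : Fin k, (‖f (circleMap 0 1 (t i.succ)) - f (circleMap 0 1 (t i.castSucc))‖₊ : ℝ≥0∞)

/-- `A` is a subarc of the curve `Γ` on which `f` has bounded variation. -/
def IsBVArcOn {E : Type*} [SeminormedAddCommGroup E] (f : ℂ → E) (Γ A : Set ℂ) : Prop :=
  A ⊆ Γ ∧ ∃ (p : ℝ → ℂ) (I : Set ℝ), I.OrdConnected ∧ ContinuousOn p I ∧
    Set.InjOn p I ∧ p '' I = A ∧ varAlong f p I < ⊤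

/-- `f` is of countable bounded variation on the curve `Γ`: there are countably many
mutually disjoint arcs of `Γ` on each of which `f` has bounded variation, whose complement
in `Γ` has logarithmic capacity zero. -/
def CBVOn {E : Type*} [SeminormedAddCommGroup E] (f : ℂ → E) (Γ : Set ℂ) : Prop :=
  ∃ γ : ℕ → Set ℂ, (Pairwise fun m n => Disjoint (γ m) (γ n)) ∧
    (∀ n, IsBVArcOn f Γ (γ n)) ∧ logCap (Γ \ ⋃ n, γ n) = 0

/-- The open sector (angle) with vertex `ζ`, direction `e` and half-opening `a`. -/
def Sector (ζ e : ℂ) (a : ℝ) : Set ℂ :=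
  {z | z ≠ ζ ∧ |Complex.arg ((z - ζ) / e)| < a}

/-- `f` has angular (nontangential) limit `L` at the boundary point `ζ` of `D`:
along every angle with vertex `ζ` lying in `D` near `ζ`, `f` tends to `L`. -/
def AngularLimit {X : Type*} [TopologicalSpace X] (f : ℂ → X) (D : Set ℂ) (ζ : ℂ)
    (L : X) : Prop :=
  ∀ (e : ℂ) (a r : ℝ), e ≠ 0 → 0 < a → a < Real.pi / 2 → 0 < r →
    Sector ζ e a ∩ Metric.ball ζ r ⊆ D →
    Filter.Tendsto f (𝓝[Sector ζ e a ∩ Metric.ball ζ r] ζ) (𝓝 L)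

/-- `u` is harmonic on `D`. -/
def IsHarmonicOn (u : ℂ → ℝ) (D : Set ℂ) : Prop :=
  ContDiffOn ℝ 2 u D ∧ ∀ z ∈ D,
    fderiv ℝ (fun w => fderiv ℝ u w 1) z 1
      + fderiv ℝ (fun w => fderiv ℝ u w Complex.I) z Complex.I = 0

/-- The curve `Γ` has tangent line at `ζ` in the direction `e`. -/
def HasTangentVia (Γ : Set ℂ) (ζ e : ℂ) : Prop :=
  e ≠ 0 ∧ Filter.Tendsto
    (fun z => Metric.infDist z {w : ℂ | ∃ t : ℝ, w = ζ + t • e} / ‖z - ζ‖)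
    (𝓝[Γ \ {ζ}] ζ) (𝓝 0)

/-- The curve `Γ` has a tangent at `ζ`. -/
def HasTangentAt (Γ : Set ℂ) (ζ : ℂ) : Prop := ∃ e : ℂ, HasTangentVia Γ ζ e

/-- `D` is a Jordan domain: a bounded domain whose boundary is a Jordan curve. -/
def IsJordanDomain (D : Set ℂ) : Prop :=
  IsOpen D ∧ IsConnected D ∧ Bornology.IsBounded D ∧
    Nonempty ((Metric.sphere (0 : ℂ) 1) ≃ₜ (frontier D))

/-- The quasihyperbolic distance in `D`: the infimum of `∫ ds / d(ζ, ∂D)` over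
(rectifiable, here Lipschitz-parametrized) curves joining `z` and `w` in `D`. -/
noncomputable def qhDist (D : Set ℂ) (z w : ℂ) : ℝ :=
  sInf {L : ℝ | ∃ γ : ℝ → ℂ, (∃ K : ℝ≥0, LipschitzOnWith K γ (Set.Icc 0 1)) ∧
    (∀ t ∈ Set.Icc (0 : ℝ) 1, γ t ∈ D) ∧ γ 0 = z ∧ γ 1 = w ∧
    L = ∫ t in (0 : ℝ)..1, ‖deriv γ t‖ / Metric.infDist (γ t) (frontier D)}

/-- `D` satisfies the quasihyperbolic boundary condition. -/
def QHBC (D : Set ℂ) : Prop :=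
  ∃ (a b : ℝ) (z₀ : ℂ), z₀ ∈ D ∧ ∀ z ∈ D,
    qhDist D z z₀ ≤
      a * Real.log (Metric.infDist z₀ (frontier D) / Metric.infDist z (frontier D)) + b

/-- `D` satisfies the (A)-condition of Ladyzhenskaya–Ural'tseva. -/
def ACondition (D : Set ℂ) : Prop :=
  ∃ Θ₀ ∈ Set.Ioo (0 : ℝ) 1, ∃ ρ₀ ∈ Set.Ioo (0 : ℝ) 1,
    ∀ ζ ∈ frontier D, ∀ ρ : ℝ, 0 < ρ → ρ ≤ ρ₀ →
      volume (D ∩ Metric.ball ζ ρ) ≤ ENNReal.ofReal Θ₀ * volume (Metric.ball ζ ρ)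

/-- `g₁, g₂` are the first generalized (weak) partial derivatives of `f` on `D`. -/
def HasWeakPartialsOn (f g₁ g₂ : ℂ → ℂ) (D : Set ℂ) : Prop :=
  MeasureTheory.LocallyIntegrableOn f D volume ∧
  MeasureTheory.LocallyIntegrableOn g₁ D volume ∧
  MeasureTheory.LocallyIntegrableOn g₂ D volume ∧
  ∀ φ : ℂ → ℝ, ContDiff ℝ (⊤ : ℕ∞) φ → HasCompactSupport φ → tsupport φ ⊆ D →
    (∫ z in D, f z * (fderiv ℝ φ z 1 : ℂ)) = -(∫ z in D, g₁ z * (φ z : ℂ)) ∧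
    (∫ z in D, f z * (fderiv ℝ φ z Complex.I : ℂ)) = -(∫ z in D, g₂ z * (φ z : ℂ))

/-- `f` is a regular solution of the Beltrami equation `f_z̄ = μ f_z` on `D`:
continuous, discrete, open, with first generalized derivatives satisfying the
equation almost everywhere. -/
def IsRegularBeltramiSolution (μ : ℂ → ℂ) (f : ℂ → ℂ) (D : Set ℂ) : Prop :=
  ContinuousOn f D ∧
  (∀ w : ℂ, ∀ z ∈ D, f z = w → 𝓝[(D ∩ f ⁻¹' {w}) \ {z}] z = ⊥) ∧
  (∀ U : Set ℂ, U ⊆ D → IsOpen U → IsOpen (f '' U)) ∧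
  ∃ g₁ g₂ : ℂ → ℂ, HasWeakPartialsOn f g₁ g₂ D ∧
    ∀ᵐ z ∂(volume.restrict D),
      (g₁ z + Complex.I * g₂ z) / 2 = μ z * ((g₁ z - Complex.I * g₂ z) / 2)

/-- `f` is a quasiconformal mapping of `ℂ` onto itself: a homeomorphism of the plane
with locally square-integrable first generalized derivatives satisfying a nondegenerate
Beltrami equation a.e. -/
def IsQCOfPlane (f : ℂ → ℂ) : Prop :=
  (∃ F : ℂ ≃ₜ ℂ, ⇑F = f) ∧
  ∃ g₁ g₂ : ℂ → ℂ, HasWeakPartialsOn f g₁ g₂ Set.univ ∧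
    (∀ K : Set ℂ, IsCompact K →
      MeasureTheory.IntegrableOn (fun z => ‖g₁ z‖ ^ 2) K volume ∧
      MeasureTheory.IntegrableOn (fun z => ‖g₂ z‖ ^ 2) K volume) ∧
    ∃ μ : ℂ → ℂ, Measurable μ ∧ (∃ k : ℝ, k < 1 ∧ ∀ᵐ z ∂volume, ‖μ z‖ ≤ k) ∧
      ∀ᵐ z ∂volume,
        (g₁ z + Complex.I * g₂ z) / 2 = μ z * ((g₁ z - Complex.I * g₂ z) / 2)

/-- The gradient of `u : ℂ → ℝ` as a vector in `ℝ²`. -/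
noncomputable def gradVec (u : ℂ → ℝ) (z : ℂ) : Fin 2 → ℝ :=
  ![fderiv ℝ u z 1, fderiv ℝ u z Complex.I]

/-- `g` is the weak (generalized) gradient of `u` on `D`. -/
def HasWeakGradOn (u : ℂ → ℝ) (g : ℂ → Fin 2 → ℝ) (D : Set ℂ) : Prop :=
  MeasureTheory.LocallyIntegrableOn u D volume ∧
  MeasureTheory.LocallyIntegrableOn g D volume ∧
  ∀ φ : ℂ → ℝ, ContDiff ℝ (⊤ : ℕ∞) φ → HasCompactSupport φ → tsupport φ ⊆ D →
    (∫ z in D, u z * fderiv ℝ φ z 1) = -(∫ z in D, g z 0 * φ z) ∧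
    (∫ z in D, u z * fderiv ℝ φ z Complex.I) = -(∫ z in D, g z 1 * φ z)

/-- The class `𝓑` of symmetric, measurable, essentially bounded, uniformly elliptic
matrix functions with determinant identically `1` on `D`. -/
def InClassB (A : ℂ → Matrix (Fin 2) (Fin 2) ℝ) (D : Set ℂ) : Prop :=
  (∀ i j, Measurable fun z => A z i j) ∧
  (∀ z ∈ D, (A z).IsSymm) ∧
  (∀ z ∈ D, (A z).det = 1) ∧
  (∃ M : ℝ, ∀ᵐ z ∂(volume.restrict D), ∀ i j, |A z i j| ≤ M) ∧
  (∃ ε : ℝ, 0 < ε ∧ ∀ z ∈ D, ∀ η : Fin 2 → ℝ,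
    ε * (η 0 ^ 2 + η 1 ^ 2) ≤ ∑ i, (A z).mulVec η i * η i)

/-- `u` is `A`-harmonic on `D` (continuous weak solution of `div(A ∇u) = 0`). -/
def IsAHarmonicOn (A : ℂ → Matrix (Fin 2) (Fin 2) ℝ) (u : ℂ → ℝ) (D : Set ℂ) : Prop :=
  ContinuousOn u D ∧ ∃ g : ℂ → Fin 2 → ℝ, HasWeakGradOn u g D ∧
    ∀ φ : ℂ → ℝ, ContDiff ℝ (⊤ : ℕ∞) φ → HasCompactSupport φ → tsupport φ ⊆ D →
      (∫ z in D, ∑ i, (A z).mulVec (g z) i * gradVec φ z i) = 0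

/-- `u` of class `C¹` is `A`-harmonic on `D`. -/
def IsAHarmonicC1On (A : ℂ → Matrix (Fin 2) (Fin 2) ℝ) (u : ℂ → ℝ) (D : Set ℂ) : Prop :=
  ContDiffOn ℝ 1 u D ∧
    ∀ φ : ℂ → ℝ, ContDiff ℝ (⊤ : ℕ∞) φ → HasCompactSupport φ → tsupport φ ⊆ D →
      (∫ z in D, ∑ i, (A z).mulVec (gradVec u z) i * gradVec φ z i) = 0

/-- `u` is of class `C^{1+α}` on `D`: continuously differentiable with locally
`α`-Hölder continuous partial derivatives. -/
def IsC1HolderOn (u : ℂ → ℝ) (α : ℝ≥0) (D : Set ℂ) : Prop :=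
  ContDiffOn ℝ 1 u D ∧ ∀ z ∈ D, ∃ r > (0 : ℝ), ∃ C : ℝ≥0,
    HolderOnWith C α (fun w => gradVec u w) (D ∩ Metric.ball z r)

/-- The entries of the matrix function `A` are locally `α`-Hölder continuous on `D`. -/
def EntriesLocHolderOn (A : ℂ → Matrix (Fin 2) (Fin 2) ℝ) (α : ℝ≥0) (D : Set ℂ) : Prop :=
  ∀ z ∈ D, ∃ r > (0 : ℝ), ∃ C : ℝ≥0, ∀ i j,
    HolderOnWith C α (fun w => A w i j) (D ∩ Metric.ball z r)

/-- `n` is the interior unit normal to `∂D` at `ζ`: a unit vector orthogonal to a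
tangent direction of `∂D` at `ζ` and pointing into `D`. -/
def IsInteriorNormalAt (D : Set ℂ) (ζ n : ℂ) : Prop :=
  ‖n‖ = 1 ∧
  (∃ e : ℂ, HasTangentVia (frontier D) ζ e ∧ (n * (starRingEnd ℂ) e).re = 0) ∧
  ∃ ε > (0 : ℝ), ∀ t : ℝ, 0 < t → t < ε → ζ + t • n ∈ D

end

/-!
Cut the circle at `1` and regard `arg ∘ λ` as a map into `ℝ / 2πℤ`. Along a finite set of
parameters it is lifted greedily to `ℝ`, always choosing the representative nearest to the previous
value; this preserves the variation exactly, since the distance in `ℝ / 2πℤ` is the distance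
between nearest representatives. The lifts normalised at a base point are uniformly bounded, so
they converge pointwise along an ultrafilter on the finite sets, and variation is lower
semicontinuous. An arc is at most `π / 2` times its chord, and gluing the cut adds one jump, which
is at most the variation of the lift itself: this gives the constant `2 * (π / 2) = π`.
-/

section Lifting

variable {ι : Type*} [LinearOrder ι] {p : ℝ}

theorem exists_coe_eq_and_edist_eq (θ : AddCircle p) (x : ℝ) :
    ∃ y : ℝ, (y : AddCircle p) = θ ∧ edist x y = edist (x : AddCircle p) θ := by
  obtain ⟨z, rfl⟩ := QuotientAddGroup.mk_surjective θ
  set n := round (p⁻¹ * (x - z))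
  refine ⟨z + n * p, ?_, ?_⟩
  · simp [← zsmul_eq_mul]
  · rw [edist_dist, edist_dist, dist_eq_norm, dist_eq_norm, Real.norm_eq_abs, ← sub_sub,
      ← AddCircle.norm_eq, AddCircle.coe_sub]

theorem exists_lift_eVariationOn_finset_eq (f : ι → AddCircle p) (F : Finset ι) :
    ∃ β : ι → ℝ, (∀ t ∈ F, (β t : AddCircle p) = f t) ∧ eVariationOn β F = eVariationOn f F := by
  induction F using Finset.induction_on_max with
  | empty => exact ⟨0, by simp, by simp [eVariationOn.subsingleton]⟩
  | insert a F hlt ih =>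
    obtain ⟨β, hlift, hvar⟩ := ih
    rcases F.eq_empty_or_nonempty with rfl | hF
    · obtain ⟨y, hy⟩ := QuotientAddGroup.mk_surjective (f a)
      exact ⟨fun _ ↦ y, by simpa using hy, by simp [eVariationOn.subsingleton]⟩
    have hmax : IsGreatest (F : Set ι) (F.max' hF) := F.isGreatest_max' hF
    obtain ⟨y, hy, hdist⟩ := exists_coe_eq_and_edist_eq (f a) (β (F.max' hF))
    have hEq : EqOn (Function.update β a y) β F := fun t ht ↦
      Function.update_of_ne (hlt t ht).ne _ _
    refine ⟨Function.update β a y, ?_, ?_⟩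
    · simp only [Finset.forall_mem_insert, Function.update_self, hy, true_and]
      exact fun t ht ↦ by rw [hEq ht, hlift t ht]
    · have hunion {E : Type _} [PseudoEMetricSpace E] (g : ι → E) :=
        eVariationOn.union' g hmax isLeast_singleton (hlt _ hmax.1).le
      rw [Finset.coe_insert, insert_eq, union_comm, hunion, hunion, eVariationOn.congr hEq, hvar,
        hEq hmax.1, Function.update_self, hdist, hlift _ hmax.1]
      simp [eVariationOn.subsingleton]

theorem exists_lift_eVariationOn_finset_eq_of_mem (f : ι → AddCircle p) {F : Finset ι} {t₀ : ι}
    (ht₀ : t₀ ∈ F) {x₀ : ℝ} (hx₀ : (x₀ : AddCircle p) = f t₀) :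
    ∃ β : ι → ℝ, β t₀ = x₀ ∧ (∀ t ∈ F, (β t : AddCircle p) = f t) ∧
      eVariationOn β F = eVariationOn f F := by
  obtain ⟨β, hlift, hvar⟩ := exists_lift_eVariationOn_finset_eq f F
  refine ⟨fun t ↦ β t + (x₀ - β t₀), by simp, fun t ht ↦ ?_, ?_⟩
  · simp [hlift t ht, hlift t₀ ht₀, hx₀]
  · simpa only [eVariationOn, edist_add_right] using hvar

theorem eVariationOn_univ_le_of_tendsto {E : Type*} [PseudoEMetricSpace E]
    {l : Filter (Finset ι)} [l.NeBot] (hl : l ≤ atTop) {b : Finset ι → ι → E} {β : ι → E}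
    (hb : ∀ t, Tendsto (b · t) l (𝓝 (β t))) {C : ℝ≥0∞}
    (hC : ∀ᶠ F in l, eVariationOn (b F) F ≤ C) : eVariationOn β univ ≤ C := by
  refine iSup_le fun ⟨n, u, hu, _⟩ ↦ ?_
  refine le_of_tendsto (tendsto_finsetSum _ fun i _ ↦ (hb (u (i + 1))).edist (hb (u i))) ?_
  filter_upwards [hC, hl (eventually_ge_atTop ((Finset.range (n + 1)).image u))] with F hF huF
  refine (eVariationOn.sum_le_of_monotoneOn_Iic (hu.monotoneOn _) fun i hi ↦ ?_).trans hF
  exact huF (Finset.mem_image_of_mem u (Finset.mem_range_succ_iff.2 hi))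

theorem exists_lift_eVariationOn_univ_le {f : ι → AddCircle p} (hf : BoundedVariationOn f univ) :
    ∃ β : ι → ℝ, (∀ t, (β t : AddCircle p) = f t) ∧ eVariationOn β univ ≤ eVariationOn f univ := by
  rcases isEmpty_or_nonempty ι with _ | ⟨⟨t₀⟩⟩
  · exact ⟨0, isEmptyElim, (eVariationOn.subsingleton _ subsingleton_univ).trans_le zero_le⟩
  obtain ⟨x₀, hx₀⟩ := QuotientAddGroup.mk_surjective (f t₀)
  choose! b hbase hlift hvar using fun (F : Finset ι) (hF : t₀ ∈ F) ↦
    exists_lift_eVariationOn_finset_eq_of_mem f hF hx₀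
  let 𝒰 : Ultrafilter (Finset ι) := Ultrafilter.of atTop
  have h𝒰 : (𝒰 : Filter (Finset ι)) ≤ atTop := Ultrafilter.of_le _
  have hmem (t : ι) : ∀ᶠ F in (𝒰 : Filter (Finset ι)), t ∈ F :=
    h𝒰 ((eventually_ge_atTop {t}).mono fun F hF ↦ hF (Finset.mem_singleton_self t))
  have hvar_le : ∀ᶠ F in (𝒰 : Filter (Finset ι)), eVariationOn (b F) F ≤ eVariationOn f univ := by
    filter_upwards [hmem t₀] with F ht₀
    exact (hvar F ht₀).trans_le (eVariationOn.mono f (subset_univ _))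
  have hbdd (t : ι) : ∀ᶠ F in (𝒰 : Filter (Finset ι)),
      b F t ∈ closedBall x₀ (eVariationOn f univ).toReal := by
    filter_upwards [hmem t₀, hmem t, hvar_le] with F ht₀ ht hF
    rw [mem_closedBall, ← hbase F ht₀, dist_edist]
    exact ENNReal.toReal_mono hf ((eVariationOn.edist_le _ ht ht₀).trans hF)
  choose β _ hβ using fun t ↦ (isCompact_closedBall x₀ (eVariationOn f univ).toReal
    ).ultrafilter_le_nhds' (𝒰.map (b · t)) (hbdd t)
  refine ⟨β, fun t ↦ ?_, eVariationOn_univ_le_of_tendsto h𝒰 hβ hvar_le⟩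
  refine tendsto_nhds_unique_of_eventuallyEq
    (((AddCircle.continuous_mk' p).tendsto _).comp (hβ t)) tendsto_const_nhds ?_
  filter_upwards [hmem t₀, hmem t] with F ht₀ ht using hlift F ht₀ t ht

theorem exists_lift_eVariationOn_le {f : ι → AddCircle p} {s : Set ι}
    (hf : BoundedVariationOn f s) :
    ∃ β : ι → ℝ, (∀ t ∈ s, (β t : AddCircle p) = f t) ∧ eVariationOn β s ≤ eVariationOn f s := by
  have hsub {E : Type _} [PseudoEMetricSpace E] (g : ι → E) :
      eVariationOn (g ∘ ((↑) : s → ι)) univ = eVariationOn g s := by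
    rw [eVariationOn.comp_eq_of_monotoneOn g _ ((Subtype.mono_coe _).monotoneOn _), image_univ,
      Subtype.range_coe]
  obtain ⟨β, hlift, hvar⟩ := exists_lift_eVariationOn_univ_le (f := f ∘ ((↑) : s → ι))
    (by rwa [BoundedVariationOn, hsub])
  have hext : Function.extend ((↑) : s → ι) β 0 ∘ (↑) = β :=
    funext (Subtype.val_injective.extend_apply β 0)
  refine ⟨Function.extend ((↑) : s → ι) β 0, fun t ht ↦ ?_, ?_⟩
  · rw [Subtype.val_injective.extend_apply β 0 ⟨t, ht⟩, hlift, Function.comp_apply]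
  · rwa [← hsub, ← hsub, hext]

end Lifting

section ClosedCurves

variable {α E : Type*} [LinearOrder α] [PseudoEMetricSpace E] {f : α → E}

theorem eVariationOn_Icc_le_two_mul_eVariationOn_Ico {a b : α} (hab : f a = f b) :
    eVariationOn f (Icc a b) ≤ 2 * eVariationOn f (Ico a b) := by
  rw [eVariationOn.eVariationOn_eq_strictMonoOn]
  refine iSup_le fun ⟨n, u, hu, hmem⟩ ↦ ?_
  have hIco {i : ℕ} (hi : i ≤ n) (hib : u i < b) : u i ∈ Ico a b := ⟨(hmem i hi).1, hib⟩
  rcases (hmem n self_mem_Iic).2.lt_or_eq with hlt | heq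
  · refine (eVariationOn.sum_le_of_monotoneOn_Iic hu.monotoneOn fun i hi ↦
      hIco hi ((hu.monotoneOn hi self_mem_Iic hi).trans_lt hlt)).trans ?_
    exact le_mul_of_one_le_left' one_le_two
  · cases n with
    | zero => simp
    | succ m =>
      have hmem_Ico : ∀ i ≤ m, u i ∈ Ico a b := fun i hi ↦
        hIco (hi.trans m.le_succ) (heq ▸ hu (hi.trans m.le_succ) self_mem_Iic (by lia))
      have ha : a ∈ Ico a b := ⟨le_rfl, (hmem_Ico m le_rfl).1.trans_lt (hmem_Ico m le_rfl).2⟩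
      dsimp only
      rw [Finset.sum_range_succ, heq, ← hab, two_mul]
      exact add_le_add (eVariationOn.sum_le_of_monotoneOn_Iic
        (hu.monotoneOn.mono (Iic_subset_Iic.2 m.le_succ)) hmem_Ico)
        (eVariationOn.edist_le f ha (hmem_Ico m le_rfl))

variable [AddCommGroup α] [IsOrderedAddMonoid α]

theorem eVariationOn_Icc_add_period {c : α} (hf : Function.Periodic f c) (a b : α) :
    eVariationOn f (Icc (a + c) (b + c)) = eVariationOn f (Icc a b) := by
  rw [← image_add_const_Icc, ← eVariationOn.comp_eq_of_monotoneOn f _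
    ((add_left_mono (a := c)).monotoneOn _)]
  exact congrArg (eVariationOn · _) (funext hf)

theorem eVariationOn_Icc_add_eq_of_periodic [Archimedean α] {c : α} (hf : Function.Periodic f c)
    (hc : 0 < c) (a b : α) :
    eVariationOn f (Icc a (a + c)) = eVariationOn f (Icc b (b + c)) := by
  have hsplit {x y z : α} (hxy : x ≤ y) (hyz : y ≤ z) :
      eVariationOn f (Icc x y) + eVariationOn f (Icc y z) = eVariationOn f (Icc x z) := by
    simpa only [univ_inter] using eVariationOn.Icc_add_Icc f hxy hyz (mem_univ y)
  obtain ⟨n, ⟨hlb, hub⟩, -⟩ := existsUnique_add_zsmul_mem_Ico hc a b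
  calc eVariationOn f (Icc a (a + c))
      = eVariationOn f (Icc (a + n • c) (a + n • c + c)) := by
        rw [← eVariationOn_Icc_add_period (hf.zsmul n), add_right_comm]
    _ = eVariationOn f (Icc (a + n • c) (b + c)) + eVariationOn f (Icc b (a + n • c)) := by
        rw [← hsplit hub.le (add_le_add_left hlb c), eVariationOn_Icc_add_period hf]
    _ = eVariationOn f (Icc b (b + c)) := by rw [add_comm, hsplit hlb hub.le]

end ClosedCurves

theorem circleVar_eq_iSup_eVariationOn {E : Type*} [SeminormedAddCommGroup E] (f : ℂ → E) :
    circleVar f = ⨆ a : ℝ, eVariationOn (f ∘ circleMap 0 1) (Icc a (a + 2 * Real.pi)) := by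
  apply le_antisymm
  · refine iSup_le fun k ↦ iSup₂_le fun t ht ↦ iSup_le fun hturn ↦ le_iSup_of_le (t 0) ?_
    let u : ℕ → ℝ := fun i ↦ t ⟨min i k, by lia⟩
    have hu : Monotone u := fun i j hij ↦ ht (Fin.mk_le_mk.2 (min_le_min_right k hij))
    have hmem (i : ℕ) : u i ∈ Icc (t 0) (t 0 + 2 * Real.pi) :=
      ⟨ht (Fin.zero_le _), (ht (Fin.le_last _)).trans hturn⟩
    refine le_of_eq_of_le ?_ (eVariationOn.sum_le (n := k) hu hmem)
    rw [Finset.sum_range]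
    refine Finset.sum_congr rfl fun i _ ↦ ?_
    have hsucc : u (i + 1) = t i.succ := congrArg t (Fin.ext (min_eq_left i.is_lt))
    have hcast : u i = t i.castSucc := congrArg t (Fin.ext (min_eq_left i.is_lt.le))
    rw [edist_eq_enorm_sub, hsucc, hcast]
    rfl
  · refine iSup_le fun a ↦ iSup_le fun ⟨n, u, hu, hmem⟩ ↦ ?_
    refine le_iSup_of_le n (le_iSup₂_of_le (fun i ↦ u i) (fun i j hij ↦ hu hij)
      (le_iSup_of_le ((hmem n).2.trans (by simpa using (hmem 0).1)) ?_))
    simp [Finset.sum_range, edist_eq_enorm_sub, enorm_eq_nnnorm]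

theorem circleVar_eq_eVariationOn_Icc {E : Type*} [SeminormedAddCommGroup E] (f : ℂ → E) :
    circleVar f = eVariationOn (f ∘ circleMap 0 1) (Icc 0 (2 * Real.pi)) := by
  have hperiodic : Function.Periodic (f ∘ circleMap 0 1) (2 * Real.pi) :=
    (periodic_circleMap 0 1).comp f
  have hcut (a : ℝ) := eVariationOn_Icc_add_eq_of_periodic hperiodic Real.two_pi_pos a 0
  simp only [circleVar_eq_iSup_eVariationOn, hcut, iSup_const, zero_add]

theorem circleVar_le_two_mul_eVariationOn_Ico {E : Type*} [SeminormedAddCommGroup E] (f : ℂ → E) :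
    circleVar f ≤ 2 * eVariationOn (f ∘ circleMap 0 1) (Ico 0 (2 * Real.pi)) := by
  rw [circleVar_eq_eVariationOn_Icc]
  refine eVariationOn_Icc_le_two_mul_eVariationOn_Ico ?_
  simpa using ((periodic_circleMap 0 1).comp f 0).symm

theorem bijOn_circleMap_Ico (c : ℂ) {R : ℝ} (hR : 0 < R) :
    BijOn (circleMap c R) (Ico 0 (2 * Real.pi)) (sphere c R) := by
  refine ⟨fun t _ ↦ circleMap_mem_sphere c hR.le t,
    injOn_circleMap_of_abs_sub_le' hR.ne' (by simp), fun z hz ↦ ?_⟩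
  rw [← abs_of_pos hR, ← range_circleMap] at hz
  obtain ⟨t, rfl⟩ := hz
  obtain ⟨s, hs, hst⟩ := (periodic_circleMap c R).exists_mem_Ico₀ Real.two_pi_pos t
  exact ⟨s, hs, hst.symm⟩

theorem exists_eqOn_comp_circleMap_circleVar_le {E : Type*} [SeminormedAddCommGroup E]
    (β : ℝ → E) :
    ∃ α : ℂ → E, EqOn (α ∘ circleMap 0 1) β (Ico 0 (2 * Real.pi)) ∧
      circleVar α ≤ 2 * eVariationOn β (Ico 0 (2 * Real.pi)) := by
  let τ : ℂ → ℝ := Function.invFunOn (circleMap 0 1) (Ico 0 (2 * Real.pi))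
  have hEq : EqOn ((β ∘ τ) ∘ circleMap 0 1) β (Ico 0 (2 * Real.pi)) := fun _ ht ↦
    congrArg β ((bijOn_circleMap_Ico 0 one_pos).invOn_invFunOn.1 ht)
  refine ⟨β ∘ τ, hEq, ?_⟩
  rw [← eVariationOn.congr hEq]
  exact circleVar_le_two_mul_eVariationOn_Ico _

theorem lipschitzOnWith_coe_arg_sphere :
    LipschitzOnWith (NNReal.pi / 2) (fun z : ℂ ↦ (arg z : AddCircle (2 * Real.pi)))
      (sphere 0 1) := by
  refine LipschitzOnWith.of_dist_le_mul fun z hz w hw ↦ ?_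
  rw [mem_sphere_zero_iff_norm] at hz hw
  have hz₀ : z ≠ 0 := norm_ne_zero_iff.1 (hz ▸ one_ne_zero)
  have hw₀ : w ≠ 0 := norm_ne_zero_iff.1 (hw ▸ one_ne_zero)
  have hdiv : (arg z : AddCircle (2 * Real.pi)) - arg w = arg (z / w) :=
    (arg_div_coe_angle hz₀ hw₀).symm
  calc dist (arg z : AddCircle (2 * Real.pi)) (arg w)
      = ‖(arg (z / w) : AddCircle (2 * Real.pi))‖ := by rw [dist_eq_norm, hdiv]
    _ ≤ |arg (z / w)| := QuotientAddGroup.norm_mk_le_norm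
    _ = InnerProductGeometry.angle z w := (angle_eq_abs_arg hz₀ hw₀).symm
    _ ≤ Real.pi / 2 * dist z w := by
        simpa only [dist_eq_norm] using angle_le_mul_norm_sub hz hw

theorem eq_exp_mul_I_of_coe_eq_coe_arg {z : ℂ} (hz : ‖z‖ = 1) {x : ℝ}
    (hx : (x : AddCircle (2 * Real.pi)) = arg z) : z = exp (x * I) := by
  have hexp : exp (x * I) = exp (arg z * I) := by
    rw [← Circle.coe_exp, ← Circle.coe_exp, ← Real.Angle.toCircle_coe, ← Real.Angle.toCircle_coe]
    exact congrArg (fun θ : Real.Angle ↦ (θ.toCircle : ℂ)) hx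
  rw [hexp]
  simpa [hz] using (norm_mul_exp_arg_mul_I z).symm

theorem eVariationOn_coe_arg_comp_circleMap_le {g : ℂ → ℂ}
    (hg : ∀ z ∈ unitCircle, g z ∈ unitCircle) :
    eVariationOn (fun t ↦ (arg (g (circleMap 0 1 t)) : AddCircle (2 * Real.pi)))
      (Ico 0 (2 * Real.pi)) ≤ (NNReal.pi / 2 : ℝ≥0) * circleVar g := by
  rw [circleVar_eq_eVariationOn_Icc]
  refine (lipschitzOnWith_coe_arg_sphere.comp_eVariationOn_le fun t _ ↦
    hg _ (circleMap_mem_sphere 0 zero_le_one t)).trans ?_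
  gcongr
  exact eVariationOn.mono _ Ico_subset_Icc_self

theorem bv_argument_function_general (lam : ℂ → ℂ)
    (hmap : ∀ z ∈ unitCircle, lam z ∈ unitCircle) (hBV : circleVar lam ≠ ⊤) :
    ∃ α : ℂ → ℝ, circleVar α ≤ ENNReal.ofReal Real.pi * circleVar lam ∧
      ∀ z ∈ unitCircle, lam z = exp (α z * I) := by
  have harg := eVariationOn_coe_arg_comp_circleMap_le hmap
  obtain ⟨β, hlift, hβ⟩ := exists_lift_eVariationOn_le
    (ne_top_of_le_ne_top (ENNReal.mul_ne_top ENNReal.coe_ne_top hBV) harg)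
  obtain ⟨α, hαβ, hα⟩ := exists_eqOn_comp_circleMap_circleVar_le β
  refine ⟨α, ?_, fun z hz ↦ ?_⟩
  · calc circleVar α
        ≤ 2 * eVariationOn β (Ico 0 (2 * Real.pi)) := hα
      _ ≤ 2 * ((NNReal.pi / 2 : ℝ≥0) * circleVar lam) := by gcongr; exact hβ.trans harg
      _ = ENNReal.ofReal Real.pi * circleVar lam := by
          have htwo : 2 * (NNReal.pi / 2) = NNReal.pi := by ring
          have hpi : ENNReal.ofReal Real.pi = NNReal.pi := by
            rw [← NNReal.coe_real_pi, ENNReal.ofReal_coe_nnreal]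
          rw [hpi, ← mul_assoc, ← ENNReal.coe_ofNat, ← ENNReal.coe_mul, htwo]
  · obtain ⟨t, ht, rfl⟩ := (bijOn_circleMap_Ico 0 one_pos).surjOn hz
    refine eq_exp_mul_I_of_coe_eq_coe_arg (mem_sphere_zero_iff_norm.1 (hmap _ hz)) ?_
    rw [← hlift t ht, ← hαβ ht, Function.comp_apply]

/-- every `BV` function `λ : ∂𝔻 → ∂𝔻` admits a `BV` function of argument
`α_λ` with `V_{α_λ} ≤ (3π/2)·V_λ` and `λ = exp(i α_λ)` on `∂𝔻`. -/
theorem bv_argument_function (lam : ℂ → ℂ)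
    (hmap : ∀ z ∈ unitCircle, lam z ∈ unitCircle)
    (hBV : circleVar lam ≠ ⊤) :
    ∃ α : ℂ → ℝ, circleVar α ≠ ⊤ ∧
      circleVar α ≤ ENNReal.ofReal (3 * Real.pi / 2) * circleVar lam ∧
      ∀ z ∈ unitCircle, lam z = Complex.exp ((α z : ℂ) * Complex.I) := by
  obtain ⟨α, hvar, hexp⟩ := bv_argument_function_general lam hmap hBV
  refine ⟨α, ne_top_of_le_ne_top (ENNReal.mul_ne_top ENNReal.ofReal_ne_top hBV) hvar,
    hvar.trans ?_, hexp⟩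
  gcongr
  linarith [Real.pi_pos]
end

section
/- If E ⊂ ℂ is a compact set of logarithmic capacity zero and f : E → ℂ is Hölder continuous, i.e. there exist M > 0 and γ ∈ (0,1] with |f(z) − f(w)| ≤ M·|z − w|^γ for all z, w ∈ E, then the image f(E) also has logarithmic capacity zero. -/
open Complex Metric MeasureTheory Filter Topology Set
open scoped ENNReal NNReal

/-!
A Hölder map with constant `C` and exponent `r` sends `n` points of `E` to `n` points whose product
of mutual distances is at most `C ^ (n choose 2)` times the `r`-th power of the original product.
Taking the root of order `n choose 2` leaves a single factor `C`, so in the limit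
`logCap (f '' E) ≤ C * logCap E ^ r`, and the right-hand side vanishes with `logCap E`.
-/

theorem holderOnWith_of_dist_le {X Y : Type*} [PseudoMetricSpace X] [PseudoMetricSpace Y]
    {C r : ℝ≥0} {f : X → Y} {s : Set X}
    (h : ∀ x ∈ s, ∀ y ∈ s, dist (f x) (f y) ≤ C * dist x y ^ (r : ℝ)) :
    HolderOnWith C r f s := by
  intro x hx y hy
  rw [edist_nndist, edist_nndist, ← ENNReal.coe_rpow_of_nonneg _ r.coe_nonneg]
  exact_mod_cast h x hx y hy

theorem prod_edist_le_diamProd {E : Set ℂ} {n : ℕ} {z : Fin n → ℂ} (hz : ∀ i, z i ∈ E) :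
    ∏ p : Fin n × Fin n with p.1 < p.2, edist (z p.1) (z p.2) ≤ diamProd E n :=
  le_iSup₂_of_le z hz le_rfl

/-- The `n`-th diameter `V_n ^ (2 / (n (n - 1)))` of `E`, whose upper limit is `logCap E`.
For `n ≤ 1` the exponent is `2 / 0 = 0` and the value is `1`. -/
noncomputable def nthDiam (E : Set ℂ) (n : ℕ) : ℝ≥0∞ :=
  diamProd E n ^ ((2 : ℝ) / ((n : ℝ) * ((n : ℝ) - 1)))

theorem nthDiam_eq_rpow_inv_choose_two (E : Set ℂ) (n : ℕ) :
    nthDiam E n = diamProd E n ^ ((n.choose 2 : ℝ)⁻¹) := by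
  rw [nthDiam, Nat.cast_choose_two, inv_div]

section HolderImage

variable {E : Set ℂ} {f : ℂ → ℂ} {C r : ℝ≥0}

theorem diamProd_image_le (hf : HolderOnWith C r f E) (n : ℕ) :
    diamProd (f '' E) n ≤ (C : ℝ≥0∞) ^ n.choose 2 * diamProd E n ^ (r : ℝ) := by
  refine iSup₂_le fun w hw => ?_
  choose z hzE hzw using hw
  obtain rfl : f ∘ z = w := funext hzw
  calc ∏ p : Fin n × Fin n with p.1 < p.2, edist (f (z p.1)) (f (z p.2))
      ≤ ∏ p : Fin n × Fin n with p.1 < p.2, (C : ℝ≥0∞) * edist (z p.1) (z p.2) ^ (r : ℝ) :=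
        Finset.prod_le_prod' fun p _ => hf.edist_le (hzE p.1) (hzE p.2)
    _ = (C : ℝ≥0∞) ^ n.choose 2 *
          (∏ p : Fin n × Fin n with p.1 < p.2, edist (z p.1) (z p.2)) ^ (r : ℝ) := by
        rw [Finset.prod_mul_distrib, Finset.prod_const, Fintype.card_product_filter_lt,
          Fintype.card_fin, ENNReal.prod_rpow_of_nonneg r.coe_nonneg]
    _ ≤ (C : ℝ≥0∞) ^ n.choose 2 * diamProd E n ^ (r : ℝ) := by
        gcongr
        exact prod_edist_le_diamProd hzE

theorem nthDiam_image_le (hf : HolderOnWith C r f E) {n : ℕ} (hn : 2 ≤ n) :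
    nthDiam (f '' E) n ≤ C * nthDiam E n ^ (r : ℝ) := by
  have choose_ne_zero : n.choose 2 ≠ 0 := (Nat.choose_pos hn).ne'
  have exponent_nonneg : 0 ≤ (n.choose 2 : ℝ)⁻¹ := by positivity
  simp only [nthDiam_eq_rpow_inv_choose_two]
  calc diamProd (f '' E) n ^ (n.choose 2 : ℝ)⁻¹
      ≤ ((C : ℝ≥0∞) ^ n.choose 2 * diamProd E n ^ (r : ℝ)) ^ (n.choose 2 : ℝ)⁻¹ :=
        ENNReal.rpow_le_rpow (diamProd_image_le hf n) exponent_nonneg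
    _ = C * (diamProd E n ^ (n.choose 2 : ℝ)⁻¹) ^ (r : ℝ) := by
        rw [ENNReal.mul_rpow_of_nonneg _ _ exponent_nonneg,
          ENNReal.pow_rpow_inv_natCast choose_ne_zero,
          ← ENNReal.rpow_mul, ← ENNReal.rpow_mul, mul_comm (r : ℝ)]

theorem logCap_image_le (hf : HolderOnWith C r f E) :
    logCap (f '' E) ≤ C * logCap E ^ (r : ℝ) := by
  have limsup_rpow : limsup (nthDiam E) atTop ^ (r : ℝ) =
      limsup (fun n => nthDiam E n ^ (r : ℝ)) atTop :=
    (ENNReal.monotone_rpow_of_nonneg r.coe_nonneg).map_limsup_of_continuousAt _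
      ENNReal.continuous_rpow_const.continuousAt
  calc limsup (nthDiam (f '' E)) atTop
      ≤ limsup (fun n => (C : ℝ≥0∞) * nthDiam E n ^ (r : ℝ)) atTop :=
        limsup_le_limsup ((eventually_ge_atTop 2).mono fun _ hn => nthDiam_image_le hf hn)
    _ = C * limsup (fun n => nthDiam E n ^ (r : ℝ)) atTop :=
        ENNReal.limsup_const_mul_of_ne_top ENNReal.coe_ne_top
    _ = C * limsup (nthDiam E) atTop ^ (r : ℝ) := by
        rw [limsup_rpow]

theorem holder_image_capacity_zero_general (hf : HolderOnWith C r f E) (hr : 0 < r)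
    (hcap : logCap E = 0) : logCap (f '' E) = 0 := by
  have hle := logCap_image_le hf
  rwa [hcap, ENNReal.zero_rpow_of_pos (NNReal.coe_pos.2 hr), mul_zero, nonpos_iff_eq_zero] at hle

end HolderImage

/-- Hölder continuous images of compact sets of logarithmic capacity zero
have logarithmic capacity zero. -/
theorem holder_image_capacity_zero (E : Set ℂ) (f : ℂ → ℂ) (M γ : ℝ)
    (hE : IsCompact E) (hcap : logCap E = 0)
    (hM : 0 < M) (hγ : γ ∈ Set.Ioc (0 : ℝ) 1)
    (hf : ∀ z ∈ E, ∀ w ∈ E, ‖f z - f w‖ ≤ M * ‖z - w‖ ^ γ) :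
    logCap (f '' E) = 0 := by
  lift M to ℝ≥0 using hM.le
  lift γ to ℝ≥0 using hγ.1.le
  exact holder_image_capacity_zero_general
    (holderOnWith_of_dist_le (by simpa only [dist_eq_norm] using hf)) hγ.1 hcap
end

section
/- The domain D = B(0,1) ∪ B(1+i,1) ∪ B(1−i,1) ⊂ ℂ, the union of the three open discs of radius 1 centred at 0, 1+i and 1−i, satisfies the quasihyperbolic boundary condition but does not satisfy the (A)-condition; in fact, for the boundary point 1 ∈ ∂D one has m(D ∩ B(1,ρ))/m(B(1,ρ)) → 1 as ρ → 0+, so that no constants Θ_0, ρ_0 ∈ (0,1) can satisfy the (A)-condition inequality. -/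
open Complex Metric MeasureTheory Filter Topology Set
open scoped ENNReal NNReal

/-- The union of the three open unit discs centred at `0`, `1+i` and `1-i`. -/
def threeDiscs : Set ℂ :=
  Metric.ball 0 1 ∪ Metric.ball (1 + Complex.I) 1 ∪ Metric.ball (1 - Complex.I) 1

/-!
A disc `B(c, r) ⊆ D` shows that `k_D(z, c) ≤ log (r / (r - |z - c|))` for `z ∈ B(c, r)`, by moving
along the radius. Hence the quasihyperbolic boundary condition follows once every `z ∈ D` lies in
such a disc with `d(z, ∂D) ≤ K (r - |z - c|)` and with `c` at bounded quasihyperbolic distance from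
`z₀`.

For the three discs `K = 4` works. By symmetry let `Im z ≥ 0`, and choose `c = 0` or `c = 1 + i`
according to the side of the line through the corners `1` and `i` on which `z` lies. Either the ray
from `c` through `z` leaves `D` on the circle `∂B(c, 1)`, or one of the two corners lies at distance
comparable to `1 - |z - c|` from `z`, because the two circles cross there at a positive angle.

At the boundary point `1` the discs `B(1 ± i, 1)` are tangent, so `B(1, ρ) \ D` lies in a rectangle
with sides `2ρ` and `ρ²`, and its proportion of `B(1, ρ)` tends to `0`.
-/

open scoped ComplexConjugate Real

section Balls

variable {E : Type*} [SeminormedAddCommGroup E] [NormedSpace ℝ E] {c c' : E} {r : ℝ}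

lemma midpoint_mem_ball_inter_ball (h : dist c c' < 2 * r) :
    midpoint ℝ c c' ∈ ball c r ∩ ball c' r := by
  simp only [mem_inter_iff, mem_ball, dist_midpoint_left, dist_midpoint_right, Real.norm_two]
  constructor <;> linarith

lemma exists_smul_mem_sphere {z : E} (hz : z ∈ ball c r) (hne : dist z c ≠ 0) :
    ∃ t : ℝ, 0 < t ∧ c + t • (z - c) ∈ sphere c r ∧ dist z (c + t • (z - c)) = r - dist z c := by
  have h_pos : 0 < dist z c := dist_nonneg.lt_of_ne' hne
  have ht : 1 < r / dist z c := (one_lt_div h_pos).2 hz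
  refine ⟨r / dist z c, one_pos.trans ht, ?_, ?_⟩
  · rw [mem_sphere, dist_self_add_left, norm_smul, Real.norm_of_nonneg (one_pos.trans ht).le,
      ← dist_eq_norm, div_mul_cancel₀ _ hne]
  · have h_diff : z - (c + (r / dist z c) • (z - c)) = (1 - r / dist z c) • (z - c) := by module
    rw [dist_eq_norm, h_diff, norm_smul, Real.norm_of_nonpos (by linarith), ← dist_eq_norm]
    field_simp
    ring

end Balls

section BoundaryDistance

variable {E : Type*} {D : Set E} {z w : E} {r : ℝ}

lemma le_infDist_frontier_of_ball_subset [PseudoMetricSpace E] (hD : IsOpen D)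
    (hfr : (frontier D).Nonempty) (h : ball z r ⊆ D) : r ≤ infDist z (frontier D) := by
  refine (le_infDist hfr).2 fun y hy => not_lt.1 fun hlt => ?_
  exact (disjoint_frontier_iff_isOpen.2 hD).notMem_of_mem_left hy (h (mem_ball'.2 hlt))

lemma infDist_frontier_pos [PseudoMetricSpace E] (hD : IsOpen D)
    (hfr : (frontier D).Nonempty) (hz : z ∈ D) : 0 < infDist z (frontier D) :=
  (isClosed_frontier.notMem_iff_infDist_pos hfr).1
    ((disjoint_frontier_iff_isOpen.2 hD).notMem_of_mem_right hz)

lemma infDist_frontier_le_dist [NormedAddCommGroup E] [NormedSpace ℝ E] [FiniteDimensional ℝ E]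
    (hz : z ∈ D) (hw : w ∉ D) : infDist z (frontier D) ≤ dist z w := by
  obtain ⟨y, hy, hzy⟩ := exists_mem_frontier_infDist_compl_eq_dist hz
    ((ne_univ_iff_exists_notMem D).2 ⟨w, hw⟩)
  calc infDist z (frontier D) ≤ dist z y := infDist_le_dist_of_mem hy
    _ = infDist z Dᶜ := hzy.symm
    _ ≤ dist z w := infDist_le_dist_of_mem hw

end BoundaryDistance

/-- A Lipschitz parametrization on `[0, 1]` of a curve in `D` from `z` to `w`: the curves over which
`qhDist` takes its infimum. -/
structure IsLipschitzPath (D : Set ℂ) (z w : ℂ) (γ : ℝ → ℂ) : Prop where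
  lipschitz : ∃ K : ℝ≥0, LipschitzOnWith K γ (Icc 0 1)
  mem : ∀ t ∈ Icc (0 : ℝ) 1, γ t ∈ D
  source : γ 0 = z
  target : γ 1 = w

/-- The relation of being connected in `D` by a Lipschitz path. Without it `qhDist` has the
junk value `sInf ∅ = 0`, so the triangle inequality requires it. -/
def LipschitzJoinedIn (D : Set ℂ) (z w : ℂ) : Prop :=
  ∃ γ, IsLipschitzPath D z w γ

/-- The speed of the curve `γ` in the quasihyperbolic metric of `D`. -/
noncomputable def qhSpeed (D : Set ℂ) (γ : ℝ → ℂ) (t : ℝ) : ℝ :=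
  ‖deriv γ t‖ / infDist (γ t) (frontier D)

/-- The quasihyperbolic length in `D` of a curve parametrized by `[0, 1]`. -/
noncomputable def qhLength (D : Set ℂ) (γ : ℝ → ℂ) : ℝ :=
  ∫ t in (0 : ℝ)..1, qhSpeed D γ t

/-- The curve `γ₁` followed by `γ₂`, each run at double speed. The parameters are truncated, instead
of splitting into cases, so that the Lipschitz property passes through compositions and sums; it is
a genuine concatenation only when `γ₁ 1 = γ₂ 0`. -/
noncomputable def curveConcat (γ₁ γ₂ : ℝ → ℂ) (t : ℝ) : ℂ :=
  γ₁ (min (2 * t) 1) + (γ₂ (max (2 * t - 1) 0) - γ₂ 0)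

section Curves

variable {D : Set ℂ} {x y z : ℂ} {γ γ₁ γ₂ : ℝ → ℂ} {t : ℝ}

lemma curveConcat_of_le_half (ht : t ≤ 1 / 2) : curveConcat γ₁ γ₂ t = γ₁ (2 * t) := by
  rw [curveConcat, min_eq_left (by linarith), max_eq_right (by linarith), sub_self, add_zero]

lemma curveConcat_of_half_le (h : γ₁ 1 = γ₂ 0) (ht : 1 / 2 ≤ t) :
    curveConcat γ₁ γ₂ t = γ₂ (2 * t - 1) := by
  rw [curveConcat, min_eq_right (by linarith), max_eq_left (by linarith), h, add_sub_cancel]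

namespace IsLipschitzPath

lemma reverse (h : IsLipschitzPath D x y γ) : IsLipschitzPath D y x (fun t => γ (1 - t)) where
  lipschitz := by
    obtain ⟨K, hK⟩ := h.lipschitz
    exact ⟨K * 1, hK.comp (LipschitzWith.of_dist_le_mul fun s t => by
      rw [dist_sub_left, NNReal.coe_one, one_mul]).lipschitzOnWith
      fun t ht => ⟨sub_nonneg.2 ht.2, sub_le_self 1 ht.1⟩⟩
  mem t ht := h.mem _ ⟨sub_nonneg.2 ht.2, sub_le_self 1 ht.1⟩
  source := by rw [sub_zero, h.target]
  target := by rw [sub_self, h.source]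

lemma concat (h₁ : IsLipschitzPath D x y γ₁) (h₂ : IsLipschitzPath D y z γ₂) :
    IsLipschitzPath D x z (curveConcat γ₁ γ₂) where
  lipschitz := by
    obtain ⟨K₁, hK₁⟩ := h₁.lipschitz
    obtain ⟨K₂, hK₂⟩ := h₂.lipschitz
    have h_double : LipschitzWith 2 fun t : ℝ => 2 * t :=
      LipschitzWith.of_dist_le_mul fun s t => by
        rw [Real.dist_eq, Real.dist_eq, ← mul_sub, abs_mul, abs_two, NNReal.coe_ofNat]
    have h_first := hK₁.comp (h_double.min_const 1).lipschitzOnWith (s := Icc 0 1)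
      fun t ht => ⟨le_min (by linarith [ht.1]) zero_le_one, min_le_right _ _⟩
    have h_second := hK₂.comp
      ((h_double.sub (LipschitzWith.const 1)).max_const 0).lipschitzOnWith (s := Icc 0 1)
      fun t ht => ⟨le_max_right _ _, max_le (show 2 * t - 1 ≤ 1 by linarith [ht.2]) zero_le_one⟩
    exact ⟨_, h_first.add (h_second.sub (LipschitzWith.const (γ₂ 0)).lipschitzOnWith)⟩
  mem t ht := by
    rcases le_total t (1 / 2) with hle | hge
    · rw [curveConcat_of_le_half hle]
      exact h₁.mem _ ⟨by linarith [ht.1], by linarith⟩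
    · rw [curveConcat_of_half_le (h₁.target.trans h₂.source.symm) hge]
      exact h₂.mem _ ⟨by linarith, by linarith [ht.2]⟩
  source := by rw [curveConcat_of_le_half (by norm_num), mul_zero, h₁.source]
  target := by
    rw [curveConcat_of_half_le (h₁.target.trans h₂.source.symm) (by norm_num)]
    norm_num [h₂.target]

lemma lineMap (h : segment ℝ x y ⊆ D) : IsLipschitzPath D x y (AffineMap.lineMap x y) where
  lipschitz := ⟨_, (lipschitzWith_lineMap x y).lipschitzOnWith⟩
  mem _ ht := h (lineMap_mem_segment ℝ x y ht)
  source := AffineMap.lineMap_apply_zero x y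
  target := AffineMap.lineMap_apply_one x y

lemma intervalIntegrable_qhSpeed (h : IsLipschitzPath D x y γ) (hD : IsOpen D)
    (hfr : (frontier D).Nonempty) : IntervalIntegrable (qhSpeed D γ) volume 0 1 := by
  obtain ⟨K, hK⟩ := h.lipschitz
  have h_cont : ContinuousOn (fun t => (infDist (γ t) (frontier D))⁻¹) (uIcc 0 1) := by
    rw [uIcc_of_le zero_le_one]
    exact ((continuous_infDist_pt _).comp_continuousOn hK.continuousOn).inv₀
      fun t ht => (infDist_frontier_pos hD hfr (h.mem t ht)).ne'
  have h_deriv : IntervalIntegrable (fun t => ‖deriv γ t‖) volume 0 1 := by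
    refine (intervalIntegrable_const (c := (K : ℝ))).mono_fun
      (measurable_deriv γ).norm.aestronglyMeasurable ?_
    rw [uIoc_of_le zero_le_one, ← restrict_Ioo_eq_restrict_Ioc]
    filter_upwards [ae_restrict_mem measurableSet_Ioo] with t ht
    rw [norm_norm, Real.norm_of_nonneg K.coe_nonneg]
    exact norm_deriv_le_of_lipschitzOn (Icc_mem_nhds ht.1 ht.2) hK
  exact h_deriv.mul_continuousOn h_cont

end IsLipschitzPath

namespace LipschitzJoinedIn

lemma symm (h : LipschitzJoinedIn D x y) : LipschitzJoinedIn D y x :=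
  h.imp' _ fun _ hγ => hγ.reverse

lemma trans (hxy : LipschitzJoinedIn D x y) (hyz : LipschitzJoinedIn D y z) :
    LipschitzJoinedIn D x z :=
  let ⟨_, h₁⟩ := hxy
  let ⟨_, h₂⟩ := hyz
  ⟨_, h₁.concat h₂⟩

end LipschitzJoinedIn

lemma qhSpeed_nonneg : 0 ≤ qhSpeed D γ t :=
  div_nonneg (norm_nonneg _) infDist_nonneg

lemma qhLength_nonneg : 0 ≤ qhLength D γ :=
  intervalIntegral.integral_nonneg zero_le_one fun _ _ => qhSpeed_nonneg

lemma qhLength_reverse : qhLength D (fun t => γ (1 - t)) = qhLength D γ := by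
  simp only [qhLength, qhSpeed, deriv_comp_const_sub, norm_neg]
  rw [intervalIntegral.integral_comp_sub_left fun t => ‖deriv γ t‖ / infDist (γ t) (frontier D)]
  norm_num

lemma qhSpeed_curveConcat_of_lt_half (ht : t < 1 / 2) :
    qhSpeed D (curveConcat γ₁ γ₂) t = 2 * qhSpeed D γ₁ (2 * t) := by
  have h_eq : curveConcat γ₁ γ₂ =ᶠ[𝓝 t] fun s => γ₁ (2 * s) := by
    filter_upwards [Iio_mem_nhds ht] with s hs using curveConcat_of_le_half (le_of_lt hs)
  rw [qhSpeed, h_eq.deriv_eq, h_eq.eq_of_nhds, deriv_comp_mul_left, norm_smul, Real.norm_two,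
    mul_div_assoc, qhSpeed]

lemma qhSpeed_curveConcat_of_half_lt (h : γ₁ 1 = γ₂ 0) (ht : 1 / 2 < t) :
    qhSpeed D (curveConcat γ₁ γ₂) t = 2 * qhSpeed D γ₂ (2 * t - 1) := by
  have h_eq : curveConcat γ₁ γ₂ =ᶠ[𝓝 t] fun s => γ₂ (2 * s - 1) := by
    filter_upwards [Ioi_mem_nhds ht] with s hs using curveConcat_of_half_le h (le_of_lt hs)
  rw [qhSpeed, h_eq.deriv_eq, h_eq.eq_of_nhds, deriv_comp_mul_left 2 (fun u => γ₂ (u - 1)),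
    deriv_comp_sub_const, norm_smul, Real.norm_two, mul_div_assoc, qhSpeed]

lemma qhLength_curveConcat (hD : IsOpen D) (hfr : (frontier D).Nonempty)
    (h₁ : IsLipschitzPath D x y γ₁) (h₂ : IsLipschitzPath D y z γ₂) :
    qhLength D (curveConcat γ₁ γ₂) = qhLength D γ₁ + qhLength D γ₂ := by
  have h_int := (h₁.concat h₂).intervalIntegrable_qhSpeed hD hfr
  have h_first : ∫ t in (0 : ℝ)..1 / 2, qhSpeed D (curveConcat γ₁ γ₂) t = qhLength D γ₁ := by
    rw [intervalIntegral.integral_congr_Ioo_of_le (by norm_num)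
      fun t ht => qhSpeed_curveConcat_of_lt_half ht.2, intervalIntegral.integral_const_mul,
      intervalIntegral.mul_integral_comp_mul_left]
    norm_num [qhLength]
  have h_second : ∫ t in (1 / 2 : ℝ)..1, qhSpeed D (curveConcat γ₁ γ₂) t = qhLength D γ₂ := by
    rw [intervalIntegral.integral_congr_Ioo_of_le (by norm_num)
      fun t ht => qhSpeed_curveConcat_of_half_lt (h₁.target.trans h₂.source.symm) ht.1,
      intervalIntegral.integral_const_mul,
      intervalIntegral.mul_integral_comp_mul_sub]
    norm_num [qhLength]
  rw [← h_first, ← h_second, intervalIntegral.integral_add_adjacent_intervals, qhLength]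
  · exact h_int.mono_set (uIcc_subset_uIcc_left (by rw [uIcc_of_le] <;> norm_num))
  · exact h_int.mono_set (uIcc_subset_uIcc_right (by rw [uIcc_of_le] <;> norm_num))

end Curves

section QuasihyperbolicDistance

variable {D : Set ℂ} {x y z c c' : ℂ} {γ : ℝ → ℂ} {r : ℝ}

lemma qhDist_eq_sInf_image :
    qhDist D x y = sInf (qhLength D '' {γ | IsLipschitzPath D x y γ}) := by
  refine congrArg sInf (Set.ext fun L => exists_congr fun γ => ?_)
  exact ⟨fun ⟨h_lip, h_mem, h_source, h_target, hL⟩ =>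
      ⟨⟨h_lip, h_mem, h_source, h_target⟩, hL.symm⟩,
    fun ⟨h, hL⟩ => ⟨h.lipschitz, h.mem, h.source, h.target, hL.symm⟩⟩

lemma qhDist_le_qhLength (h : IsLipschitzPath D x y γ) : qhDist D x y ≤ qhLength D γ := by
  rw [qhDist_eq_sInf_image]
  exact csInf_le ⟨0, forall_mem_image.2 fun _ _ => qhLength_nonneg⟩ (mem_image_of_mem _ h)

lemma le_qhDist {a : ℝ} (hxy : LipschitzJoinedIn D x y)
    (h : ∀ γ, IsLipschitzPath D x y γ → a ≤ qhLength D γ) : a ≤ qhDist D x y := by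
  rw [qhDist_eq_sInf_image]
  exact le_csInf (Set.Nonempty.image _ hxy) (forall_mem_image.2 h)

lemma qhDist_comm (D : Set ℂ) (x y : ℂ) : qhDist D x y = qhDist D y x := by
  have h_subset (z w : ℂ) : qhLength D '' {γ | IsLipschitzPath D z w γ} ⊆
      qhLength D '' {γ | IsLipschitzPath D w z γ} :=
    image_subset_iff.2 fun _ hγ => ⟨_, hγ.reverse, qhLength_reverse⟩
  rw [qhDist_eq_sInf_image, qhDist_eq_sInf_image, (h_subset x y).antisymm (h_subset y x)]

lemma qhDist_triangle (hD : IsOpen D) (hfr : (frontier D).Nonempty)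
    (hxy : LipschitzJoinedIn D x y) (hyz : LipschitzJoinedIn D y z) :
    qhDist D x z ≤ qhDist D x y + qhDist D y z := by
  rw [← sub_le_iff_le_add]
  refine le_qhDist hxy fun γ₁ h₁ => ?_
  rw [sub_le_comm]
  refine le_qhDist hyz fun γ₂ h₂ => ?_
  rw [sub_le_iff_le_add', ← qhLength_curveConcat hD hfr h₁ h₂]
  exact qhDist_le_qhLength (h₁.concat h₂)

lemma lipschitzJoinedIn_center (hball : ball c r ⊆ D) (hz : z ∈ ball c r) :
    LipschitzJoinedIn D z c :=
  ⟨_, .lineMap (((convex_ball c r).segment_subset hz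
    (mem_ball_self (pos_of_mem_ball hz))).trans hball)⟩

lemma integral_div_add_mul_eq_log {q : ℝ} (hq : q < r) (hr : 0 < r) :
    ∫ t in (0 : ℝ)..1, q * (r - q + q * t)⁻¹ = Real.log (r / (r - q)) := by
  rw [intervalIntegral.integral_const_mul,
    intervalIntegral.mul_integral_comp_add_mul (f := fun s : ℝ => s⁻¹), mul_zero, mul_one, add_zero,
    sub_add_cancel, integral_inv_of_pos (sub_pos.2 hq) hr]

lemma qhSpeed_lineMap_center_le (hD : IsOpen D) (hfr : (frontier D).Nonempty)
    (hball : ball c r ⊆ D) (hz : z ∈ ball c r) {t : ℝ} (ht : t ∈ Icc (0 : ℝ) 1) :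
    qhSpeed D (AffineMap.lineMap z c) t ≤ dist z c * (r - dist z c + dist z c * t)⁻¹ := by
  have h_pos : 0 < r - dist z c + dist z c * t :=
    add_pos_of_pos_of_nonneg (sub_pos.2 hz) (mul_nonneg dist_nonneg ht.1)
  have h_dist : dist (AffineMap.lineMap z c t) c = (1 - t) * dist z c := by
    rw [dist_lineMap_right, Real.norm_of_nonneg (sub_nonneg.2 ht.2)]
  have h_infDist : r - dist z c + dist z c * t ≤
      infDist (AffineMap.lineMap z c t) (frontier D) :=
    le_infDist_frontier_of_ball_subset hD hfr
      ((ball_subset_ball' (by rw [h_dist]; linarith)).trans hball)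
  rw [qhSpeed, AffineMap.hasDerivAt_lineMap.deriv, ← dist_eq_norm', ← div_eq_mul_inv]
  exact div_le_div_of_nonneg_left dist_nonneg h_pos h_infDist

lemma qhDist_center_le (hD : IsOpen D) (hfr : (frontier D).Nonempty) (hball : ball c r ⊆ D)
    (hz : z ∈ ball c r) : qhDist D z c ≤ Real.log (r / (r - dist z c)) := by
  have hr : 0 < r := pos_of_mem_ball hz
  have h_path : IsLipschitzPath D z c (AffineMap.lineMap z c) :=
    .lineMap (((convex_ball c r).segment_subset hz (mem_ball_self hr)).trans hball)
  have h_cont : ContinuousOn (fun t => dist z c * (r - dist z c + dist z c * t)⁻¹)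
      (uIcc 0 1) := by
    rw [uIcc_of_le zero_le_one]
    refine continuousOn_const.mul (ContinuousOn.inv₀ (by fun_prop) fun t ht => ?_)
    exact (add_pos_of_pos_of_nonneg (sub_pos.2 hz) (mul_nonneg dist_nonneg ht.1)).ne'
  calc qhDist D z c ≤ qhLength D (AffineMap.lineMap z c) := qhDist_le_qhLength h_path
    _ ≤ ∫ t in (0 : ℝ)..1, dist z c * (r - dist z c + dist z c * t)⁻¹ :=
      intervalIntegral.integral_mono_on zero_le_one (h_path.intervalIntegrable_qhSpeed hD hfr)
        h_cont.intervalIntegrable fun _ => qhSpeed_lineMap_center_le hD hfr hball hz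
    _ = Real.log (r / (r - dist z c)) := integral_div_add_mul_eq_log hz hr

lemma lipschitzJoinedIn_centers (hc : ball c r ⊆ D) (hc' : ball c' r ⊆ D)
    (h : dist c c' < 2 * r) : LipschitzJoinedIn D c c' :=
  (lipschitzJoinedIn_center hc (midpoint_mem_ball_inter_ball h).1).symm.trans
    (lipschitzJoinedIn_center hc' (midpoint_mem_ball_inter_ball h).2)

lemma qhDist_centers_le (hD : IsOpen D) (hfr : (frontier D).Nonempty) (hc : ball c r ⊆ D)
    (hc' : ball c' r ⊆ D) (h : dist c c' < 2 * r) :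
    qhDist D c c' ≤ 2 * Real.log (r / (r - dist c c' / 2)) := by
  obtain ⟨h_mem, h_mem'⟩ := midpoint_mem_ball_inter_ball h
  have h_left := qhDist_center_le hD hfr hc h_mem
  have h_right := qhDist_center_le hD hfr hc' h_mem'
  rw [dist_midpoint_left, Real.norm_two, inv_mul_eq_div] at h_left
  rw [dist_midpoint_right, Real.norm_two, inv_mul_eq_div] at h_right
  calc qhDist D c c' ≤ qhDist D c (midpoint ℝ c c') + qhDist D (midpoint ℝ c c') c' :=
      qhDist_triangle hD hfr (lipschitzJoinedIn_center hc h_mem).symm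
        (lipschitzJoinedIn_center hc' h_mem')
    _ ≤ 2 * Real.log (r / (r - dist c c' / 2)) := by
      rw [qhDist_comm D c]
      linarith

lemma qhbc_of_exists_ball {z₀ : ℂ} {K M : ℝ} (hD : IsOpen D) (hfr : (frontier D).Nonempty)
    (hz₀ : z₀ ∈ D)
    (h : ∀ z ∈ D, ∃ c, ball c r ⊆ D ∧ z ∈ ball c r ∧
      infDist z (frontier D) ≤ K * (r - dist z c) ∧
      LipschitzJoinedIn D c z₀ ∧ qhDist D c z₀ ≤ M) :
    QHBC D := by
  refine ⟨1, Real.log (K * r / infDist z₀ (frontier D)) + M, z₀, hz₀, fun z hz => ?_⟩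
  obtain ⟨c, hball, hzc, h_infDist, h_joined, hM⟩ := h z hz
  have hr : 0 < r := pos_of_mem_ball hzc
  have h_gap : 0 < r - dist z c := sub_pos.2 hzc
  have hd : 0 < infDist z (frontier D) := infDist_frontier_pos hD hfr hz
  have hd₀ : 0 < infDist z₀ (frontier D) := infDist_frontier_pos hD hfr hz₀
  have hK : 0 < K := pos_of_mul_pos_left (hd.trans_le h_infDist) h_gap.le
  have h_log : Real.log (r / (r - dist z c)) ≤ Real.log (K * r / infDist z (frontier D)) := by
    refine Real.log_le_log (by positivity) ?_
    rw [div_le_div_iff₀ h_gap hd]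
    nlinarith
  calc qhDist D z z₀ ≤ qhDist D z c + qhDist D c z₀ :=
      qhDist_triangle hD hfr (lipschitzJoinedIn_center hball hzc) h_joined
    _ ≤ Real.log (K * r / infDist z (frontier D)) + M :=
      add_le_add ((qhDist_center_le hD hfr hball hzc).trans h_log) hM
    _ = 1 * Real.log (infDist z₀ (frontier D) / infDist z (frontier D)) +
        (Real.log (K * r / infDist z₀ (frontier D)) + M) := by
      rw [one_mul, ← add_assoc, ← Real.log_mul (by positivity) (by positivity)]
      field_simp

end QuasihyperbolicDistance

section Density

lemma tendsto_measure_inter_ball_div_of_diff {X : Type*} [PseudoMetricSpace X] [ProperSpace X]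
    [MeasurableSpace X] {μ : Measure X} [μ.IsOpenPosMeasure] [IsFiniteMeasureOnCompacts μ]
    {D : Set X} (hD : MeasurableSet D) {ζ : X}
    (h : Tendsto (fun ρ => μ (ball ζ ρ \ D) / μ (ball ζ ρ)) (𝓝[>] 0) (𝓝 0)) :
    Tendsto (fun ρ => μ (D ∩ ball ζ ρ) / μ (ball ζ ρ)) (𝓝[>] 0) (𝓝 1) := by
  have h_sub := ENNReal.Tendsto.sub (tendsto_const_nhds (x := 1)) h (.inl ENNReal.one_ne_top)
  rw [tsub_zero] at h_sub
  refine h_sub.congr' ?_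
  filter_upwards [self_mem_nhdsWithin] with ρ hρ
  have h_pos : μ (ball ζ ρ) ≠ 0 := (measure_ball_pos μ ζ hρ).ne'
  have h_fin : μ (ball ζ ρ) ≠ ⊤ := measure_ball_lt_top.ne
  have h_diff : μ (ball ζ ρ \ D) / μ (ball ζ ρ) ≠ ⊤ :=
    ENNReal.div_ne_top (measure_ne_top_of_subset sdiff_subset h_fin) h_pos
  refine (ENNReal.eq_sub_of_add_eq h_diff ?_).symm
  rw [← ENNReal.add_div, inter_comm, measure_inter_add_sdiff _ hD, ENNReal.div_self h_pos h_fin]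

lemma not_aCondition_of_tendsto_density {D : Set ℂ} {ζ : ℂ} (hζ : ζ ∈ frontier D)
    (h : Tendsto (fun ρ : ℝ => volume (D ∩ ball ζ ρ) / volume (ball ζ ρ)) (𝓝[>] 0) (𝓝 1)) :
    ¬ ACondition D := by
  rintro ⟨Θ, ⟨-, hΘ⟩, ρ₀, ⟨hρ₀, -⟩, hA⟩
  have h_le : 1 ≤ ENNReal.ofReal Θ := by
    refine le_of_tendsto h ?_
    filter_upwards [Ioc_mem_nhdsGT hρ₀] with ρ hρ
    exact ENNReal.div_le_of_le_mul (hA ζ hζ ρ hρ.1 hρ.2)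
  exact hΘ.not_ge (ENNReal.one_le_ofReal.1 h_le)

lemma volume_reProdIm {s t : Set ℝ} (hs : MeasurableSet s) (ht : MeasurableSet t) :
    volume (s ×ℂ t) = volume s * volume t :=
  (volume_preserving_equiv_real_prod.measure_preimage (hs.prod ht).nullMeasurableSet).trans
    (Measure.prod_prod s t)

end Density

section UnitDiscs

lemma mem_unit_ball_iff {z c : ℂ} :
    z ∈ ball c 1 ↔ (z.re - c.re) ^ 2 + (z.im - c.im) ^ 2 < 1 := by
  rw [mem_ball, dist_eq_re_im, Real.sqrt_lt' one_pos, one_pow]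

lemma mem_unit_sphere_iff {z c : ℂ} :
    z ∈ sphere c 1 ↔ (z.re - c.re) ^ 2 + (z.im - c.im) ^ 2 = 1 := by
  rw [mem_sphere, dist_eq_re_im, Real.sqrt_eq_one]

-- With `p = x + iy`, the hypotheses give `‖p‖² ≤ x`, hence `1 - x ≤ (1 - ‖p‖) (1 + ‖p‖)`.
lemma norm_sub_one_le {p : ℂ} (h_sector : |p.im| ≤ p.re) (h_diamond : p.re + |p.im| ≤ 1) :
    ‖p - 1‖ ≤ 4 * (1 - ‖p‖) := by
  have h_sq : ‖p‖ ^ 2 ≤ p.re := by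
    rw [Complex.sq_norm, normSq_apply, ← abs_mul_abs_self p.im]
    nlinarith [abs_nonneg p.im]
  have h_re : 1 - p.re ≤ 2 * (1 - ‖p‖) := by nlinarith [abs_nonneg p.im, norm_nonneg p]
  calc ‖p - 1‖ ≤ |p.re - 1| + |p.im| := by simpa using norm_le_abs_re_add_abs_im (p - 1)
    _ = 1 - p.re + |p.im| := by
      rw [abs_of_nonpos (by linarith [abs_nonneg p.im]), neg_sub]
    _ ≤ 4 * (1 - ‖p‖) := by linarith

lemma norm_sub_I_le {p : ℂ} (h_sector : |p.re| ≤ p.im) (h_diamond : p.im + |p.re| ≤ 1) :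
    ‖p - I‖ ≤ 4 * (1 - ‖p‖) := by
  have h_rotate : -I * p - 1 = -I * (p - I) := by linear_combination -I_sq
  have h_le := norm_sub_one_le (p := -I * p) (by simpa) (by simpa)
  rw [h_rotate] at h_le
  simpa using h_le

end UnitDiscs

/-- The centres of the three discs whose union is `threeDiscs`. -/
def discCenters : Set ℂ := {0, 1 + I, 1 - I}

namespace threeDiscs

lemma isOpen : IsOpen threeDiscs :=
  (isOpen_ball.union isOpen_ball).union isOpen_ball

lemma mem_iff {z : ℂ} : z ∈ threeDiscs ↔ z.re ^ 2 + z.im ^ 2 < 1 ∨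
    (z.re - 1) ^ 2 + (z.im - 1) ^ 2 < 1 ∨ (z.re - 1) ^ 2 + (z.im + 1) ^ 2 < 1 := by
  simp only [threeDiscs, mem_union, mem_unit_ball_iff, or_assoc]
  simp

lemma conj_mem_iff {z : ℂ} : conj z ∈ threeDiscs ↔ z ∈ threeDiscs := by
  have h_sub : (-z.im - 1) ^ 2 = (z.im + 1) ^ 2 := by ring
  have h_add : (-z.im + 1) ^ 2 = (z.im - 1) ^ 2 := by ring
  simp only [mem_iff, conj_re, conj_im, neg_sq, h_sub, h_add, or_comm]

lemma ball_subset {c : ℂ} (hc : c ∈ discCenters) : ball c 1 ⊆ threeDiscs := by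
  rcases hc with rfl | rfl | rfl
  · exact subset_union_left.trans subset_union_left
  · exact subset_union_right.trans subset_union_left
  · exact subset_union_right

lemma zero_mem_discCenters : 0 ∈ discCenters := .inl rfl

lemma zero_mem : 0 ∈ threeDiscs := ball_subset zero_mem_discCenters (mem_ball_self one_pos)

lemma one_notMem : 1 ∉ threeDiscs := by norm_num [mem_iff]

lemma I_notMem : I ∉ threeDiscs := by norm_num [mem_iff]

lemma one_mem_frontier : 1 ∈ frontier threeDiscs := by
  rw [isOpen.frontier_eq]
  refine ⟨closure_mono (ball_subset zero_mem_discCenters) ?_, one_notMem⟩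
  simp [closure_ball]

lemma frontier_nonempty : (frontier threeDiscs).Nonempty := ⟨1, one_mem_frontier⟩

lemma notMem_of_mem_sphere_zero {w : ℂ} (hw : w ∈ sphere 0 1) (h_re : w.re ≤ 0) :
    w ∉ threeDiscs := by
  rw [mem_unit_sphere_iff, zero_re, zero_im, sub_zero, sub_zero] at hw
  simp only [mem_iff, not_or, not_lt]
  refine ⟨hw.ge, ?_, ?_⟩ <;> nlinarith

lemma notMem_of_mem_sphere_one_add_I {w : ℂ} (hw : w ∈ sphere (1 + I) 1)
    (h : 1 ≤ w.re ∨ 1 ≤ w.im) : w ∉ threeDiscs := by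
  have hw : (w.re - 1) ^ 2 + (w.im - 1) ^ 2 = 1 := by simpa using mem_unit_sphere_iff.1 hw
  simp only [mem_iff, not_or, not_lt]
  refine ⟨?_, hw.ge, ?_⟩
  · rcases h with h | h <;> nlinarith
  · nlinarith

lemma exists_notMem_dist_le_of_mem_ball_zero {z : ℂ} (hz : z ∈ ball 0 1) (h_im : 0 ≤ z.im)
    (h_add : z.re + z.im ≤ 1) : ∃ w ∉ threeDiscs, dist z w ≤ 4 * (1 - dist z 0) := by
  rcases lt_or_ge z.re 0 with h_re | h_re
  · obtain ⟨t, ht, h_sphere, h_dist⟩ :=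
      exists_smul_mem_sphere hz (dist_ne_zero.2 (by rintro rfl; simp at h_re))
    refine ⟨_, notMem_of_mem_sphere_zero h_sphere ?_, ?_⟩
    · simpa using mul_nonpos_of_nonneg_of_nonpos ht.le h_re.le
    · rw [h_dist]; linarith [mem_ball.1 hz]
  rcases le_total z.im z.re with h | h
  · refine ⟨1, one_notMem, ?_⟩
    rw [dist_eq_norm, dist_zero_right]
    exact norm_sub_one_le (by rwa [abs_of_nonneg h_im]) (by rwa [abs_of_nonneg h_im])
  · refine ⟨I, I_notMem, ?_⟩
    rw [dist_eq_norm, dist_zero_right]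
    exact norm_sub_I_le (by rwa [abs_of_nonneg h_re]) (by rwa [abs_of_nonneg h_re, add_comm])

lemma exists_notMem_dist_le_of_mem_ball_one_add_I {z : ℂ} (hz : z ∈ ball (1 + I) 1)
    (h_add : 1 ≤ z.re + z.im) : ∃ w ∉ threeDiscs, dist z w ≤ 4 * (1 - dist z (1 + I)) := by
  by_cases h_outer : 1 < z.re ∨ 1 < z.im
  · obtain ⟨t, ht, h_sphere, h_dist⟩ :=
      exists_smul_mem_sphere hz (dist_ne_zero.2 (by rintro rfl; simp at h_outer))
    refine ⟨_, notMem_of_mem_sphere_one_add_I h_sphere ?_, ?_⟩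
    · refine h_outer.imp (fun h => ?_) (fun h => ?_) <;>
        simpa using mul_nonneg ht.le (sub_nonneg.2 h.le)
    · rw [h_dist]; linarith [mem_ball.1 hz]
  obtain ⟨h_re, h_im⟩ : z.re ≤ 1 ∧ z.im ≤ 1 := by simpa using h_outer
  have h_abs_re : |(1 + I - z).re| = 1 - z.re := by simpa using h_re
  have h_abs_im : |(1 + I - z).im| = 1 - z.im := by simpa using h_im
  have h_sub_re : (1 + I - z).re = 1 - z.re := by simp
  have h_sub_im : (1 + I - z).im = 1 - z.im := by simp
  rcases le_total z.re z.im with h | h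
  · refine ⟨I, I_notMem, ?_⟩
    have h_corner : 1 + I - z - 1 = I - z := by ring
    rw [dist_eq_norm', dist_eq_norm', ← h_corner]
    exact norm_sub_one_le (by rw [h_abs_im, h_sub_re]; linarith)
      (by rw [h_abs_im, h_sub_re]; linarith)
  · refine ⟨1, one_notMem, ?_⟩
    have h_corner : 1 + I - z - I = 1 - z := by ring
    rw [dist_eq_norm', dist_eq_norm', ← h_corner]
    exact norm_sub_I_le (by rw [h_abs_re, h_sub_im]; linarith)
      (by rw [h_abs_re, h_sub_im]; linarith)

lemma exists_center_notMem_dist_le_of_im_nonneg {z : ℂ} (hz : z ∈ threeDiscs) (h_im : 0 ≤ z.im) :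
    ∃ c ∈ discCenters, z ∈ ball c 1 ∧ ∃ w ∉ threeDiscs, dist z w ≤ 4 * (1 - dist z c) := by
  have h_upper : z.re ^ 2 + z.im ^ 2 < 1 ∨ (z.re - 1) ^ 2 + (z.im - 1) ^ 2 < 1 := by
    rcases mem_iff.1 hz with h | h | h
    · exact .inl h
    · exact .inr h
    · right; nlinarith
  rcases le_total (z.re + z.im) 1 with h_add | h_add
  · have h_ball : z ∈ ball 0 1 := by
      rw [mem_unit_ball_iff, zero_re, zero_im, sub_zero, sub_zero]
      rcases h_upper with h | h <;> nlinarith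
    exact ⟨0, zero_mem_discCenters, h_ball,
      exists_notMem_dist_le_of_mem_ball_zero h_ball h_im h_add⟩
  · have h_ball : z ∈ ball (1 + I) 1 := by
      simp only [mem_unit_ball_iff, add_re, add_im, one_re, one_im, I_re, I_im, add_zero, zero_add]
      rcases h_upper with h | h <;> nlinarith
    exact ⟨1 + I, .inr (.inl rfl), h_ball,
      exists_notMem_dist_le_of_mem_ball_one_add_I h_ball h_add⟩

lemma conj_mem_discCenters {c : ℂ} (hc : c ∈ discCenters) : conj c ∈ discCenters := by
  rcases hc with rfl | rfl | rfl <;> simp [discCenters, sub_eq_add_neg]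

lemma exists_center_infDist_frontier_le {z : ℂ} (hz : z ∈ threeDiscs) :
    ∃ c ∈ discCenters, z ∈ ball c 1 ∧ infDist z (frontier threeDiscs) ≤ 4 * (1 - dist z c) := by
  suffices h : ∃ c ∈ discCenters, z ∈ ball c 1 ∧
      ∃ w ∉ threeDiscs, dist z w ≤ 4 * (1 - dist z c) by
    obtain ⟨c, hc, hzc, w, hw, h_dist⟩ := h
    exact ⟨c, hc, hzc, (infDist_frontier_le_dist hz hw).trans h_dist⟩
  rcases le_total 0 z.im with h_im | h_im
  · exact exists_center_notMem_dist_le_of_im_nonneg hz h_im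
  · obtain ⟨c, hc, hzc, w, hw, h_dist⟩ := exists_center_notMem_dist_le_of_im_nonneg
      (conj_mem_iff.2 hz) (by simpa using h_im)
    rw [mem_ball, dist_conj_comm] at hzc
    rw [dist_conj_comm, dist_conj_comm z c] at h_dist
    exact ⟨conj c, conj_mem_discCenters hc, hzc, conj w, mt conj_mem_iff.1 hw, h_dist⟩

lemma dist_zero_le_of_mem_discCenters {c : ℂ} (hc : c ∈ discCenters) : dist c 0 ≤ 3 / 2 := by
  rw [dist_eq_re_im, Real.sqrt_le_left (by norm_num)]
  rcases hc with rfl | rfl | rfl <;> norm_num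

lemma qhbc : QHBC threeDiscs := by
  refine qhbc_of_exists_ball (r := 1) (K := 4) (M := 2 * Real.log 4) isOpen frontier_nonempty
    zero_mem fun z hz => ?_
  obtain ⟨c, hc, hzc, h_infDist⟩ := exists_center_infDist_frontier_le hz
  have h_norm : dist c 0 ≤ 3 / 2 := dist_zero_le_of_mem_discCenters hc
  have h_near : dist c 0 < 2 * 1 := by linarith
  refine ⟨c, ball_subset hc, hzc, h_infDist,
    lipschitzJoinedIn_centers (ball_subset hc) (ball_subset zero_mem_discCenters) h_near, ?_⟩
  refine (qhDist_centers_le isOpen frontier_nonempty (ball_subset hc)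
    (ball_subset zero_mem_discCenters) h_near).trans ?_
  gcongr
  · exact div_pos one_pos (by linarith)
  · rw [div_le_iff₀ (by linarith)]
    linarith

lemma ball_one_diff_subset {ρ : ℝ} (hρ : 0 < ρ) :
    ball 1 ρ \ threeDiscs ⊆ Icc (1 - ρ) (1 + ρ) ×ℂ Icc (-(ρ ^ 2 / 2)) (ρ ^ 2 / 2) := by
  rintro z ⟨h_ball, h_notMem⟩
  simp only [mem_iff, not_or, not_lt] at h_notMem
  obtain ⟨-, h_upper, h_lower⟩ := h_notMem
  have h_ball : (z.re - 1) ^ 2 + z.im ^ 2 < ρ ^ 2 := by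
    simpa [dist_eq_re_im, Real.sqrt_lt' hρ] using h_ball
  simp only [mem_reProdIm, mem_Icc]
  refine ⟨⟨?_, ?_⟩, ?_, ?_⟩ <;> nlinarith

lemma volume_ball_one_diff_div_le {ρ : ℝ} (hρ : 0 < ρ) :
    volume (ball 1 ρ \ threeDiscs) / volume (ball (1 : ℂ) ρ) ≤ ENNReal.ofReal ρ := by
  have h_ball : volume (ball (1 : ℂ) ρ) = ENNReal.ofReal (ρ ^ 2 * π) := by
    rw [Complex.volume_ball, ENNReal.ofReal_mul (by positivity), ENNReal.ofReal_pow hρ.le,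
      ← NNReal.coe_real_pi, ENNReal.ofReal_coe_nnreal]
  refine ENNReal.div_le_of_le_mul ?_
  calc volume (ball 1 ρ \ threeDiscs)
      ≤ volume (Icc (1 - ρ) (1 + ρ) ×ℂ Icc (-(ρ ^ 2 / 2)) (ρ ^ 2 / 2)) :=
        measure_mono (ball_one_diff_subset hρ)
    _ = ENNReal.ofReal (2 * ρ ^ 3) := by
        rw [volume_reProdIm measurableSet_Icc measurableSet_Icc, Real.volume_Icc, Real.volume_Icc,
          ← ENNReal.ofReal_mul (by linarith)]
        ring_nf
    _ ≤ ENNReal.ofReal (ρ * (ρ ^ 2 * π)) := by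
        refine ENNReal.ofReal_le_ofReal ?_
        nlinarith [Real.pi_gt_three, pow_pos hρ 3]
    _ = ENNReal.ofReal ρ * volume (ball (1 : ℂ) ρ) := by rw [h_ball, ENNReal.ofReal_mul hρ.le]

lemma tendsto_density_one :
    Tendsto (fun ρ : ℝ => volume (threeDiscs ∩ ball (1 : ℂ) ρ) / volume (ball (1 : ℂ) ρ))
      (𝓝[>] 0) (𝓝 1) := by
  refine tendsto_measure_inter_ball_div_of_diff isOpen.measurableSet ?_
  have h_ofReal : Tendsto ENNReal.ofReal (𝓝[>] 0) (𝓝 0) :=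
    (ENNReal.continuous_ofReal.tendsto' 0 0 ENNReal.ofReal_zero).mono_left nhdsWithin_le_nhds
  refine tendsto_of_tendsto_of_tendsto_of_le_of_le' tendsto_const_nhds h_ofReal
    (.of_forall fun _ => zero_le) ?_
  filter_upwards [self_mem_nhdsWithin] with ρ hρ using volume_ball_one_diff_div_le hρ

end threeDiscs

/-- the union of the three discs satisfies the quasihyperbolic boundary
condition but not the (A)-condition; at the boundary point `1` the density of the domain
tends to `1`. -/
theorem three_discs_qhbc_not_A :
    QHBC threeDiscs ∧
    Filter.Tendsto
      (fun ρ : ℝ => volume (threeDiscs ∩ Metric.ball (1 : ℂ) ρ) /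
        volume (Metric.ball (1 : ℂ) ρ)) (𝓝[>] 0) (𝓝 1) ∧
    ¬ ACondition threeDiscs :=
  ⟨threeDiscs.qhbc, threeDiscs.tendsto_density_one,
    not_aCondition_of_tendsto_density threeDiscs.one_mem_frontier threeDiscs.tendsto_density_one⟩
end
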